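/- arXiv:1510.07777 — 4 statements merged into one kernel-verified Lean document; each statement's English description precedes it below -/
import Mathlib

section
/- For integers p, q ≥ 2, the Coxeter group associated to the 3×3 Coxeter matrix M(p,q) with diagonal entries 1, entries M₁₂ = M₂₁ = p, M₂₃ = M₃₂ = q, and M₁₃ = M₃₁ = 2 is a finite group if and only if (p-2)(q-2) < 4. -/
/-!
Write `a = s₁`, `b = s₂`, `c = s₃`.

*Spherical pairs.* Up to the symmetry `a ↔ c`, which exchanges `p` and `q`, the condition
`(p - 2)(q - 2) < 4` leaves `p = 2` and `(p, q) = (3, 3), (3, 4), (3, 5)`. The subgroup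
`H = ⟨b, c⟩` is a quotient of a finite dihedral group (`finite_closure_pair`), and coset enumeration
shows that `W ⧸ H` has at most `2`, `4`, `6` or `12` elements, respectively
(`finite_of_spherical`). Hence `W` is finite.

*Other pairs.* Otherwise `p, q ≥ 3` and `1/p + 1/q ≤ 1/2`. Put `α = cos (π/p)` and `β = cos (π/q)`;
then `α² + β² ≥ 1` (`one_le_cos_sq_add_cos_sq`). In the geometric representation of `W` on `ℝ³`
the plane spanned by the simple root of `b` and by `u = (α, 0, β)` is invariant under both `b` and
`a c`. On it the Coxeter element `a c b` has determinant `1` and trace `4 (α² + β²) - 2 ≥ 2`, and the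
coordinate along `u` strictly increases along the orbit of `u` (`coxeterElement_orbit`). So `a c b`
has infinite order. That the geometric representation respects the Coxeter relations comes from
Mathlib's Chebyshev formula for powers of a product of two reflections (`reflection_pair_pow`).
-/

/-- The rank-3 Coxeter matrix `M(p,q)` of the Coxeter group `[p,q]`: diagonal entries `1`,
`M₁₂ = M₂₁ = p`, `M₂₃ = M₃₂ = q`, `M₁₃ = M₃₁ = 2`. -/
def tilingCoxeterMatrix (p q : ℕ) (hp : 2 ≤ p) (hq : 2 ≤ q) : CoxeterMatrix (Fin 3) where
  M := !![1, p, 2; p, 1, q; 2, q, 1]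
  isSymm := by
    ext i j
    fin_cases i <;> fin_cases j <;> simp [Matrix.transpose_apply]
  diagonal := by
    intro i; fin_cases i <;> rfl
  off_diagonal := by
    intro i j h
    fin_cases i <;> fin_cases j <;> simp_all <;> omega

/-! ### Finiteness of the spherical groups -/

open scoped Pointwise in
/-- If every element of `S` is an involution that maps `T` into itself, then the subgroup generated
by `S` maps `T` into itself. -/
lemma closure_smul_mem {G X : Type*} [Group G] [MulAction G X] {S : Set G} {T : Set X}
    (hS : ∀ s ∈ S, s * s = 1) (hT : ∀ s ∈ S, ∀ x ∈ T, s • x ∈ T)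
    {g : G} (hg : g ∈ Subgroup.closure S) {x : X} (hx : x ∈ T) : g • x ∈ T := by
  have hle : Subgroup.closure S ≤ MulAction.stabilizer G T := by
    rw [Subgroup.closure_le]
    intro s hs
    rw [SetLike.mem_coe, MulAction.mem_stabilizer_set]
    refine fun y => ⟨fun h => ?_, hT s hs y⟩
    have := hT s hs _ h
    rwa [smul_smul, hS s hs, one_smul] at this
  exact (MulAction.mem_stabilizer_set.1 (hle hg) x).2 hx

/-- Two involutions whose product has finite order generate a finite (dihedral) group. -/
lemma finite_closure_pair {G : Type*} [Group G] {b c : G} {q : ℕ} (hq : 0 < q)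
    (hb : b * b = 1) (hc : c * c = 1) (hbc : (b * c) ^ q = 1) :
    Finite (Subgroup.closure {b, c}) := by
  have hbi : b⁻¹ = b := inv_eq_of_mul_eq_one_left hb
  have hci : c⁻¹ = c := inv_eq_of_mul_eq_one_left hc
  set Z : Set G := (Subgroup.zpowers (b * c) : Set G) with hZ
  have hfin : Z.Finite := by
    rw [hZ, _root_.finite_zpowers]
    exact isOfFinOrder_iff_pow_eq_one.2 ⟨q, hq, hbc⟩
  -- Conjugation by `b` inverts `b * c`.
  have hconj (i : ℤ) : b * (b * c) ^ i = (b * c) ^ (-i) * b := by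
    have h : b * (b * c) * b⁻¹ = (b * c)⁻¹ := by
      rw [mul_inv_rev, hbi, hci, ← mul_assoc, hb, one_mul]
    have h2 := conj_zpow (a := b) (b := b * c) (i := i)
    rw [h, inv_zpow'] at h2
    rw [h2]; group
  have hc' : c = (b * c) ^ (-1 : ℤ) * b := by
    rw [zpow_neg_one, mul_inv_rev, hbi, hci, mul_assoc, hb, mul_one]
  set T : Set G := Z ∪ (fun x => x * b) '' Z
  have hT : T.Finite := hfin.union (hfin.image _)
  have hbT : ∀ x ∈ T, b * x ∈ T := by
    rintro x (⟨i, rfl⟩ | ⟨_, ⟨i, rfl⟩, rfl⟩)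
    · exact Or.inr ⟨_, ⟨-i, rfl⟩, (hconj i).symm⟩
    · refine Or.inl ⟨-i, ?_⟩
      simp only
      rw [← mul_assoc, hconj, mul_assoc, hb, mul_one]
  have hZT : ∀ x ∈ T, (b * c) ^ (-1 : ℤ) * x ∈ T := by
    rintro x (⟨i, rfl⟩ | ⟨_, ⟨i, rfl⟩, rfl⟩)
    · exact Or.inl ⟨-1 + i, zpow_add _ _ _⟩
    · refine Or.inr ⟨_, ⟨-1 + i, rfl⟩, ?_⟩
      simp only
      rw [zpow_add, mul_assoc]
  have hsub : (Subgroup.closure {b, c} : Set G) ⊆ T := by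
    intro g hg
    have h1 : (1 : G) ∈ T := Or.inl (Subgroup.one_mem _)
    have := closure_smul_mem (S := {b, c}) (T := T) ?_ ?_ hg h1
    · simpa using this
    · rintro s (rfl | rfl) <;> assumption
    · rintro s (rfl | rfl) x hx
      · exact hbT x hx
      · rw [smul_eq_mul, hc', mul_assoc]
        exact hZT _ (hbT x hx)
  exact hT.subset hsub

/-- Coset enumeration over `H = ⟨b, c⟩`: a finite set of cosets that contains `H` and is stable under
the generators exhausts `G ⧸ H`. -/
lemma finite_of_stable_cosets {G : Type*} [Group G] {a b c : G} {q : ℕ} (hq : 0 < q)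
    (hgen : Subgroup.closure {a, b, c} = ⊤)
    (ha : a * a = 1) (hb : b * b = 1) (hc : c * c = 1) (hbc : (b * c) ^ q = 1)
    (T : Set (G ⧸ Subgroup.closure {b, c})) (hT : T.Finite)
    (h1 : ((1 : G) : G ⧸ Subgroup.closure {b, c}) ∈ T)
    (h : ∀ x ∈ T, a • x ∈ T ∧ b • x ∈ T ∧ c • x ∈ T) : Finite G := by
  have : Finite (Subgroup.closure {b, c}) := finite_closure_pair hq hb hc hbc
  have : Finite (G ⧸ Subgroup.closure {b, c}) := by
    rw [← Set.finite_univ_iff]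
    refine hT.subset fun x _ => ?_
    induction x using QuotientGroup.induction_on with
    | H g =>
      have hg : g ∈ Subgroup.closure {a, b, c} := hgen ▸ Subgroup.mem_top g
      have := closure_smul_mem (T := T) ?_ ?_ hg h1
      · rwa [MulAction.Quotient.smul_coe, smul_eq_mul, mul_one] at this
      · rintro s (rfl | rfl | rfl) <;> assumption
      · rintro s (rfl | rfl | rfl) x hx
        exacts [(h x hx).1, (h x hx).2.1, (h x hx).2.2]
  exact Finite.of_subgroup_quotient (Subgroup.closure {b, c})

/-- The explicit coset tables. For `(p, q) = (3, 3), (3, 4), (3, 5)` the cosets correspond to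
the vertices of the tetrahedron, the octahedron and the icosahedron. -/
lemma finite_of_spherical {G : Type*} [Group G] {a b c : G} {p q : ℕ} (hq : 0 < q)
    (hgen : Subgroup.closure {a, b, c} = ⊤)
    (ha : a * a = 1) (hb : b * b = 1) (hc : c * c = 1)
    (hab : (a * b) ^ p = 1) (hbc : (b * c) ^ q = 1) (hac : (a * c) ^ 2 = 1)
    (hpq : p = 2 ∨ p = 3 ∧ (q = 3 ∨ q = 4 ∨ q = 5)) : Finite G := by
  let X := G ⧸ Subgroup.closure {b, c}
  have aa (x : X) : a • a • x = x := by rw [smul_smul, ha, one_smul]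
  have bb (x : X) : b • b • x = x := by rw [smul_smul, hb, one_smul]
  have cc (x : X) : c • c • x = x := by rw [smul_smul, hc, one_smul]
  have ca (x : X) : c • a • x = a • c • x := by
    have := congrArg (· • (c • a • x)) hac
    simpa [pow_succ, mul_smul, aa, cc] using this.symm
  set o : X := ((1 : G) : X) with ho
  have bo : b • o = o := by
    rw [ho, MulAction.Quotient.smul_coe, QuotientGroup.eq]
    simpa using Subgroup.subset_closure (by simp)
  have co : c • o = o := by
    rw [ho, MulAction.Quotient.smul_coe, QuotientGroup.eq]
    simpa using Subgroup.subset_closure (by simp)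
  have finish (T : Set X) := finite_of_stable_cosets hq hgen ha hb hc hbc T
  rcases hpq with rfl | ⟨rfl, hq'⟩
  · have ba (x : X) : b • a • x = a • b • x := by
      have := congrArg (· • (b • a • x)) hab
      simpa [pow_succ, mul_smul, aa, bb] using this.symm
    refine finish {o, a • o} (Set.toFinite _) (by simp [← ho]) ?_
    rintro x (rfl | rfl) <;> simp [aa, ba, ca, bo, co]
  have aba (x : X) : a • b • a • x = b • a • b • x := by
    have := congrArg (· • (b • a • b • x)) hab
    simpa [pow_succ, mul_smul, aa, bb] using this
  set x1 := a • o with hx1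
  set x2 := b • x1 with hx2
  set x3 := c • x2 with hx3
  have a1 : a • x1 = o := aa _
  have b2 : b • x2 = x1 := bb _
  have c3 : c • x3 = x2 := cc _
  have c1 : c • x1 = x1 := by rw [hx1, ca, co]
  have a2 : a • x2 = x2 := by rw [hx2, hx1, aba, bo]
  have a3 : a • x3 = x3 := by rw [hx3, ← ca, a2]
  rcases hq' with rfl | rfl | rfl
  · have cbc (x : X) : b • c • b • x = c • b • c • x := by
      have := congrArg (· • (c • b • c • x)) hbc
      simpa [pow_succ, mul_smul, bb, cc] using this
    have b3 : b • x3 = x3 := by rw [hx3, hx2, cbc, c1]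
    refine finish {o, x1, x2, x3} (Set.toFinite _) (by simp [← ho]) ?_
    rintro x (rfl | rfl | rfl | rfl)
    · exact ⟨by simp [← hx1], by simp [bo], by simp [co]⟩
    · exact ⟨by simp [a1], by simp [← hx2], by simp [c1]⟩
    · exact ⟨by simp [a2], by simp [b2], by simp [← hx3]⟩
    · exact ⟨by simp [a3], by simp [b3], by simp [c3]⟩
  · have cbcb (x : X) : c • b • c • b • x = b • c • b • c • x := by
      have := congrArg (· • (c • b • c • b • x)) hbc
      simpa [pow_succ, mul_smul, bb, cc] using this.symm
    set x4 := b • x3 with hx4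
    set x5 := a • x4 with hx5
    have b4 : b • x4 = x3 := bb _
    have a5 : a • x5 = x4 := aa _
    have c4 : c • x4 = x4 := by rw [hx4, hx3, hx2, cbcb, c1]
    have b5 : b • x5 = x5 := by rw [hx5, hx4, ← aba, a3]
    have c5 : c • x5 = x5 := by rw [hx5, ca, c4]
    refine finish {o, x1, x2, x3, x4, x5} (Set.toFinite _) (by simp [← ho]) ?_
    rintro x (rfl | rfl | rfl | rfl | rfl | rfl)
    · exact ⟨by simp [← hx1], by simp [bo], by simp [co]⟩
    · exact ⟨by simp [a1], by simp [← hx2], by simp [c1]⟩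
    · exact ⟨by simp [a2], by simp [b2], by simp [← hx3]⟩
    · exact ⟨by simp [a3], by simp [← hx4], by simp [c3]⟩
    · exact ⟨by simp [← hx5], by simp [b4], by simp [c4]⟩
    · exact ⟨by simp [a5], by simp [b5], by simp [c5]⟩
  · have bcbcb (x : X) : b • c • b • c • b • x = c • b • c • b • c • x := by
      have := congrArg (· • (c • b • c • b • c • x)) hbc
      simpa [pow_succ, mul_smul, bb, cc] using this
    -- The index of a coset is its distance from `o`; `x5` and `y5` are at the same distance.
    set x4 := b • x3 with hx4
    set x5 := c • x4 with hx5
    set y5 := a • x4 with hy5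
    set x6 := a • x5 with hx6
    set x7 := b • x6 with hx7
    set x8 := c • x7 with hx8
    set x9 := b • x8 with hx9
    set x10 := a • x9 with hx10
    have b4 : b • x4 = x3 := bb _
    have c5 : c • x5 = x4 := cc _
    have a5' : a • y5 = x4 := aa _
    have a6 : a • x6 = x5 := aa _
    have b7 : b • x7 = x6 := bb _
    have c8 : c • x8 = x7 := cc _
    have b9 : b • x9 = x8 := bb _
    have a10 : a • x10 = x9 := aa _
    have b5 : b • x5 = x5 := by rw [hx5, hx4, hx3, hx2, bcbcb, c1]
    have b5' : b • y5 = y5 := by rw [hy5, hx4, ← aba, a3]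
    have c5' : c • y5 = x6 := by rw [hy5, ca]
    have c6 : c • x6 = y5 := by rw [← c5', cc]
    have a7 : a • x7 = x7 := by rw [hx7, hx6, aba, b5]
    have a8 : a • x8 = x8 := by rw [hx8, ← ca, a7]
    have c9 : c • x9 = x9 := by
      rw [hx9, hx8, hx7, ← c5', ← bcbcb, b5', c5', ← hx7, ← hx8]
    have b10 : b • x10 = x10 := by rw [hx10, hx9, ← aba, a8]
    have c10 : c • x10 = x10 := by rw [hx10, ca, c9]
    refine finish {o, x1, x2, x3, x4, x5, y5, x6, x7, x8, x9, x10} (Set.toFinite _)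
      (by simp [← ho]) ?_
    rintro x (rfl | rfl | rfl | rfl | rfl | rfl | rfl | rfl | rfl | rfl | rfl | rfl)
    · exact ⟨by simp [← hx1], by simp [bo], by simp [co]⟩
    · exact ⟨by simp [a1], by simp [← hx2], by simp [c1]⟩
    · exact ⟨by simp [a2], by simp [b2], by simp [← hx3]⟩
    · exact ⟨by simp [a3], by simp [← hx4], by simp [c3]⟩
    · exact ⟨by simp [← hy5], by simp [b4], by simp [← hx5]⟩
    · exact ⟨by simp [← hx6], by simp [b5], by simp [c5]⟩
    · exact ⟨by simp [a5'], by simp [b5'], by simp [c5']⟩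
    · exact ⟨by simp [a6], by simp [← hx7], by simp [c6]⟩
    · exact ⟨by simp [a7], by simp [b7], by simp [← hx8]⟩
    · exact ⟨by simp [a8], by simp [← hx9], by simp [c8]⟩
    · exact ⟨by simp [← hx10], by simp [b9], by simp [c9]⟩
    · exact ⟨by simp [a10], by simp [b10], by simp [c10]⟩

/-! ### The geometric representation -/

open Module Polynomial Polynomial.Chebyshev in
/-- Two reflections whose mirrors meet at the angle `π / m` have a product of order dividing `m`: it
is a rotation by `2 π / m` of the plane spanned by the two roots. -/
lemma reflection_pair_pow {V : Type*} [AddCommGroup V] [Module ℝ V] {x y : V} {f g : Dual ℝ V}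
    (hf : f x = 2) (hg : g y = 2) {m : ℕ} (hm : 3 ≤ m)
    (h : f y * g x = 4 * Real.cos (Real.pi / m) ^ 2) :
    (reflection hf * reflection hg) ^ m = 1 := by
  have hm0 : (0 : ℝ) < m := by positivity
  set θ : ℝ := 2 * (Real.pi / m) with hθ
  have hmθ : (m : ℝ) * θ = 2 * Real.pi := by rw [hθ]; field_simp
  have ht : 2 * Real.cos θ = f y * g x - 2 := by rw [h, hθ, Real.cos_two_mul]; ring
  have hsin : Real.sin θ ≠ 0 := by
    refine (Real.sin_pos_of_pos_of_lt_pi (by positivity) ?_).ne'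
    have : (3 : ℝ) ≤ m := by exact_mod_cast hm
    nlinarith [Real.pi_pos]
  have hS (n : ℤ) : (S ℝ n).eval (2 * Real.cos θ) = Real.sin ((n + 1) * θ) / Real.sin θ := by
    rw [eq_div_iff hsin, S_two_mul_real_cos]
  -- In each parity of `m`, both Chebyshev coefficients contain a vanishing factor.
  have key : (S ℝ ((m - 2 : ℤ) / 2)).eval (2 * Real.cos θ) *
        ((S ℝ ((m - 1 : ℤ) / 2)).eval (2 * Real.cos θ) +
          (S ℝ ((m - 3 : ℤ) / 2)).eval (2 * Real.cos θ)) = 0 ∧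
      (S ℝ ((m - 1 : ℤ) / 2)).eval (2 * Real.cos θ) *
        ((S ℝ ((m : ℤ) / 2)).eval (2 * Real.cos θ) +
          (S ℝ ((m - 2 : ℤ) / 2)).eval (2 * Real.cos θ)) = 0 := by
    rcases Nat.even_or_odd' m with ⟨k, hk | hk⟩
    · have hz : (S ℝ ((k : ℤ) - 1)).eval (2 * Real.cos θ) = 0 := by
        rw [hS]
        have : (((k : ℤ) - 1 : ℤ) + 1 : ℝ) * θ = Real.pi := by
          rw [hk] at hmθ; push_cast at hmθ ⊢; linarith
        rw [this, Real.sin_pi, zero_div]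
      rw [show ((m : ℤ) - 2) / 2 = k - 1 by omega, show ((m : ℤ) - 1) / 2 = k - 1 by omega, hz]
      simp
    · have hz : (S ℝ (k : ℤ)).eval (2 * Real.cos θ) +
          (S ℝ ((k : ℤ) - 1)).eval (2 * Real.cos θ) = 0 := by
        rw [hS, hS, ← add_div]
        have : (((k : ℤ) : ℝ) + 1) * θ = 2 * Real.pi - (((k : ℤ) - 1 : ℤ) + 1 : ℝ) * θ := by
          rw [hk] at hmθ; push_cast at hmθ ⊢; linarith
        rw [this, Real.sin_two_pi_sub, neg_add_cancel, zero_div]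
      rw [show ((m : ℤ) - 2) / 2 = k - 1 by omega, show ((m : ℤ) - 1) / 2 = k by omega,
        show ((m : ℤ) - 3) / 2 = k - 1 by omega, show (m : ℤ) / 2 = k by omega, hz]
      simp
  ext z
  rw [reflection_mul_reflection_pow_apply hf hg m z (2 * Real.cos θ) ht, key.1, key.2]
  simp

open Module in
lemma reflection_pair_sq {V : Type*} [AddCommGroup V] [Module ℝ V] {x y : V} {f g : Dual ℝ V}
    (hf : f x = 2) (hg : g y = 2) (hfy : f y = 0) (hgx : g x = 0) :
    (reflection hf * reflection hg) ^ 2 = 1 := by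
  ext z
  simp [pow_two, reflection_apply, hf, hg, hfy, hgx]
  module

open Module in
lemma reflection_mul_self {V : Type*} [AddCommGroup V] [Module ℝ V] {x : V} {f : Dual ℝ V}
    (hf : f x = 2) : reflection hf * reflection hf = 1 := by
  ext z
  simp [involutive_reflection hf z]

/-- The Cartan matrix `(-2 cos (π / Mᵢⱼ))` of `M(p, q)`, in terms of `α = cos (π / p)` and
`β = cos (π / q)`. -/
def tilingCartan (α β : ℝ) : Matrix (Fin 3) (Fin 3) ℝ :=
  !![2, -2 * α, 0; -2 * α, 2, -2 * β; 0, -2 * β, 2]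

/-- The simple coroot of index `i`, as a linear form on `ℝ³`; the simple roots are the standard
basis vectors. -/
def tilingCoroot (α β : ℝ) (i : Fin 3) : Module.Dual ℝ (Fin 3 → ℝ) :=
  LinearMap.proj i ∘ₗ (tilingCartan α β).mulVecLin

lemma tilingCoroot_single (α β : ℝ) (i j : Fin 3) :
    tilingCoroot α β i (Pi.single j 1) = tilingCartan α β i j := by
  simp [tilingCoroot]

lemma tilingCoroot_self (α β : ℝ) (i : Fin 3) :
    tilingCoroot α β i (Pi.single i 1) = 2 := by
  rw [tilingCoroot_single]; fin_cases i <;> simp [tilingCartan]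

/-- The simple reflections of `ℝ³` in the geometric representation. -/
noncomputable def tilingReflection (α β : ℝ) (i : Fin 3) : (Fin 3 → ℝ) ≃ₗ[ℝ] (Fin 3 → ℝ) :=
  Module.reflection (tilingCoroot_self α β i)

lemma tilingReflection_apply (α β : ℝ) (i : Fin 3) (v : Fin 3 → ℝ) (j : Fin 3) :
    tilingReflection α β i v j =
      v j - (tilingCartan α β i 0 * v 0 + tilingCartan α β i 1 * v 1 +
        tilingCartan α β i 2 * v 2) * if j = i then 1 else 0 := by
  simp [tilingReflection, Module.reflection_apply, tilingCoroot, Matrix.mulVec, dotProduct,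
    Fin.sum_univ_three, Pi.single_apply]

lemma tilingReflection_isLiftable {p q : ℕ} (hp : 3 ≤ p) (hq : 3 ≤ q) :
    (tilingCoxeterMatrix p q (by omega) (by omega)).IsLiftable
      (tilingReflection (Real.cos (Real.pi / p)) (Real.cos (Real.pi / q))) := by
  intro i j
  fin_cases i <;> fin_cases j
  · exact (pow_one _).trans (reflection_mul_self _)
  · exact reflection_pair_pow (m := p) _ _ hp (by simp [tilingCoroot_single, tilingCartan]; ring)
  · exact reflection_pair_sq _ _ (by simp [tilingCoroot_single, tilingCartan])
      (by simp [tilingCoroot_single, tilingCartan])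
  · exact reflection_pair_pow (m := p) _ _ hp (by simp [tilingCoroot_single, tilingCartan]; ring)
  · exact (pow_one _).trans (reflection_mul_self _)
  · exact reflection_pair_pow (m := q) _ _ hq (by simp [tilingCoroot_single, tilingCartan]; ring)
  · exact reflection_pair_sq _ _ (by simp [tilingCoroot_single, tilingCartan])
      (by simp [tilingCoroot_single, tilingCartan])
  · exact reflection_pair_pow (m := q) _ _ hq (by simp [tilingCoroot_single, tilingCartan]; ring)
  · exact (pow_one _).trans (reflection_mul_self _)

/-! ### A Coxeter element of infinite order -/

lemma one_le_cos_sq_add_cos_sq {p q : ℕ} (hp : 3 ≤ p) (hq : 3 ≤ q)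
    (h : 4 ≤ ((p : ℤ) - 2) * ((q : ℤ) - 2)) :
    1 ≤ Real.cos (Real.pi / p) ^ 2 + Real.cos (Real.pi / q) ^ 2 := by
  have hp' : (0 : ℝ) < p := by positivity
  have hq' : (0 : ℝ) < q := by positivity
  have hp3 : (3 : ℝ) ≤ p := by exact_mod_cast hp
  have h' : (4 : ℝ) ≤ ((p : ℝ) - 2) * ((q : ℝ) - 2) := by exact_mod_cast h
  have hpi := Real.pi_pos
  -- The hypothesis says `1 / p + 1 / q ≤ 1 / 2`, whence `cos (π / q) ≥ sin (π / p)`.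
  have hangle : Real.pi / q ≤ Real.pi / 2 - Real.pi / p := by
    have : Real.pi / 2 - Real.pi / p - Real.pi / q =
        Real.pi * (((p : ℝ) - 2) * ((q : ℝ) - 2) - 4) / (2 * p * q) := by
      field_simp; ring
    have h0 : 0 ≤ Real.pi * (((p : ℝ) - 2) * ((q : ℝ) - 2) - 4) / (2 * p * q) :=
      div_nonneg (mul_nonneg hpi.le (by linarith)) (by positivity)
    linarith
  have hcos : Real.sin (Real.pi / p) ≤ Real.cos (Real.pi / q) := by
    rw [← Real.cos_pi_div_two_sub]
    refine Real.cos_le_cos_of_nonneg_of_le_pi (by positivity) ?_ hangle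
    have : 0 < Real.pi / p := by positivity
    linarith
  have hsin : 0 ≤ Real.sin (Real.pi / p) :=
    Real.sin_nonneg_of_nonneg_of_le_pi (by positivity)
      (div_le_self hpi.le (by linarith))
  nlinarith [Real.sin_sq_add_cos_sq (Real.pi / p)]

/-- In the invariant plane of the vectors `x e₂ + y u`, where `u = (α, 0, β)`, the Coxeter element
maps `(x, y)` to `(2 S y - x, (4 S - 1) y - 2 x)` with `S = α² + β²`. If `S ≥ 1`, this keeps
`y - x ≥ 1` and increases `y` by at least `2`. -/
lemma coxeterElement_orbit {α β : ℝ} (h : 1 ≤ α ^ 2 + β ^ 2) (n : ℕ) :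
    ∃ x y : ℝ, 1 + 2 * n ≤ y ∧ x + 1 ≤ y ∧
      ((tilingReflection α β 0 * tilingReflection α β 2 * tilingReflection α β 1) ^ n)
        ![α, 0, β] = ![y * α, x, y * β] := by
  induction n with
  | zero => exact ⟨0, 1, by simp⟩
  | succ n ih =>
    obtain ⟨x, y, hy, hxy, hv⟩ := ih
    have hy0 : 0 ≤ y := le_trans (by positivity) hy
    have hSy : y ≤ (α ^ 2 + β ^ 2) * y := le_mul_of_one_le_left hy0 h
    refine ⟨2 * ((α ^ 2 + β ^ 2) * y) - x, 4 * ((α ^ 2 + β ^ 2) * y) - y - 2 * x, ?_, ?_, ?_⟩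
    · push_cast; linarith
    · linarith
    · rw [pow_succ', LinearEquiv.mul_apply, hv]
      ext i
      fin_cases i <;>
        simp [tilingReflection_apply, tilingCartan] <;> ring

/-- A power of the Coxeter element with positive exponent moves `u = (α, 0, β)`, since `α > 0`; so
its order is infinite. -/
theorem infinite_tilingGroup {p q : ℕ} (hp : 3 ≤ p) (hq : 3 ≤ q)
    (h : 4 ≤ ((p : ℤ) - 2) * ((q : ℤ) - 2)) :
    ¬ Finite (tilingCoxeterMatrix p q (by omega) (by omega)).Group := by
  intro hfin
  set M := tilingCoxeterMatrix p q (by omega) (by omega)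
  let cs := M.toCoxeterSystem
  let φ := cs.lift ⟨_, tilingReflection_isLiftable hp hq⟩
  have hφ (i : Fin 3) : φ (cs.simple i) = _ :=
    cs.lift_apply_simple (tilingReflection_isLiftable hp hq) i
  obtain ⟨n, hn, hpow⟩ := isOfFinOrder_iff_pow_eq_one.1
    (isOfFinOrder_of_finite (cs.simple 0 * cs.simple 2 * cs.simple 1))
  obtain ⟨x, y, hy, -, hv⟩ :=
    coxeterElement_orbit (one_le_cos_sq_add_cos_sq hp hq h) n
  have hφn := congrArg φ hpow
  rw [map_pow, map_mul, map_mul, hφ, hφ, hφ, map_one] at hφn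
  rw [hφn] at hv
  have h0 : Real.cos (Real.pi / p) = y * Real.cos (Real.pi / p) := by
    simpa using congrFun hv 0
  have hα : 0 < Real.cos (Real.pi / p) := by
    have hp3 : (3 : ℝ) ≤ p := by exact_mod_cast hp
    have hpos : 0 < Real.pi / p := div_pos Real.pi_pos (by linarith)
    refine Real.cos_pos_of_mem_Ioo ⟨by linarith [Real.pi_pos], ?_⟩
    exact div_lt_div_of_pos_left Real.pi_pos two_pos (by linarith)
  have hn' : (1 : ℝ) ≤ n := by exact_mod_cast hn
  nlinarith

/-! ### Classification -/

theorem coxeter_group_finite_iff_spherical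
    (p q : ℕ) (hp : 2 ≤ p) (hq : 2 ≤ q) :
    Finite (tilingCoxeterMatrix p q hp hq).Group ↔
      ((p : ℤ) - 2) * ((q : ℤ) - 2) < 4 := by
  constructor
  · intro hfin
    by_contra! h
    have hp3 : 3 ≤ p := by
      by_contra hlt
      obtain rfl : p = 2 := by omega
      norm_num at h
    have hq3 : 3 ≤ q := by
      by_contra hlt
      obtain rfl : q = 2 := by omega
      norm_num at h
    exact infinite_tilingGroup hp3 hq3 h hfin
  · intro h
    have hcases : (p = 2 ∨ p = 3 ∧ (q = 3 ∨ q = 4 ∨ q = 5)) ∨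
        (q = 2 ∨ q = 3 ∧ (p = 3 ∨ p = 4 ∨ p = 5)) := by
      have : p < 4 ∨ q < 4 := by
        by_contra! hlt
        have h1 : (2 : ℤ) ≤ p - 2 := by omega
        have h2 : (2 : ℤ) ≤ q - 2 := by omega
        nlinarith
      rcases this with hlt | hlt
      · obtain rfl | rfl : p = 2 ∨ p = 3 := by omega
        · simp
        · norm_num at h
          omega
      · obtain rfl | rfl : q = 2 ∨ q = 3 := by omega
        · simp
        · norm_num at h
          omega
    set M := tilingCoxeterMatrix p q hp hq
    let cs := M.toCoxeterSystem
    have hgen : Subgroup.closure {cs.simple 0, cs.simple 1, cs.simple 2} = ⊤ := by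
      rw [← cs.subgroup_closure_range_simple]
      congr 1
      ext w
      simp [Fin.exists_fin_succ, eq_comm]
    have hgen' : Subgroup.closure {cs.simple 2, cs.simple 1, cs.simple 0} = ⊤ := by
      rw [← hgen]
      congr 1
      ext w
      simp only [Set.mem_insert_iff, Set.mem_singleton_iff]
      tauto
    have hsq (i : Fin 3) := cs.simple_mul_simple_self i
    have hrel (i j : Fin 3) := cs.simple_mul_simple_pow i j
    rcases hcases with hpq | hpq
    · exact finite_of_spherical (p := p) (q := q) (by omega) hgen (hsq 0) (hsq 1) (hsq 2)
        (hrel 0 1) (hrel 1 2) (hrel 0 2) hpq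
    · exact finite_of_spherical (p := q) (q := p) (by omega) hgen' (hsq 2) (hsq 1) (hsq 0)
        (hrel 2 1) (hrel 1 0) (hrel 2 0) hpq
end

section
/- For integers p, q ≥ 2 with (p-2)(q-2) < 4, the Coxeter group associated to the 3×3 Coxeter matrix M(p,q) (with M₁₂ = p, M₂₃ = q, M₁₃ = 2, diagonal entries 1) has exactly 8pq/(4 - (p-2)(q-2)) elements. -/
/-- The group `⟨b, c⟩` generated by the last two simple reflections has order `2q`, provided that
`bc` has order `q`. It has the order of the dihedral group because `b ∉ ⟨bc⟩` by length parity. -/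
lemma card_vertexStabilizer {M : CoxeterMatrix (Fin 3)} {W : Type*} [Group W]
    (cs : CoxeterSystem M W) {q : ℕ} (hord : orderOf (cs.simple 1 * cs.simple 2) = q) :
    Nat.card (Subgroup.closure {cs.simple 1, cs.simple 2}) = 2 * q := by
  set b := cs.simple 1 with hb
  set c := cs.simple 2 with hc
  set P := Subgroup.closure {b, c} with hP
  set R := Subgroup.zpowers (b * c) with hR
  have hbP : b ∈ P := Subgroup.subset_closure (by simp)
  have hcP : c ∈ P := Subgroup.subset_closure (by simp)
  have hRP : R ≤ P := by
    rw [hR, Subgroup.zpowers_le]; exact mul_mem hbP hcP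
  have hbb : b * b = 1 := cs.simple_mul_simple_self 1
  have hcc : c * c = 1 := cs.simple_mul_simple_self 2
  have hbR : b ∉ R := by
    rintro ⟨k, hk⟩
    have := congrArg cs.lengthParity hk
    simp only [map_zpow, map_mul, hb, hc, cs.lengthParity_simple] at this
    rw [← ofAdd_add, show (1 + 1 : ZMod 2) = 0 from rfl, ofAdd_zero, one_zpow] at this
    exact absurd this (by decide)
  have hbinv : b⁻¹ = b := inv_eq_of_mul_eq_one_left hbb
  have hcinv : c⁻¹ = c := inv_eq_of_mul_eq_one_left hcc
  -- conjugation by `b` inverts the rotation `bc`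
  have hconj : ∀ x ∈ R, b * x * b ∈ R := by
    rintro _ ⟨k, rfl⟩
    have h : b * (b * c) ^ k * b = (b * (b * c) * b⁻¹) ^ k := by rw [conj_zpow, hbinv]
    have h' : b * (b * c) * b⁻¹ = (b * c)⁻¹ := by
      rw [mul_inv_rev, hbinv, hcinv, ← mul_assoc, hbb, one_mul]
    simp only [h, h']
    exact zpow_mem (inv_mem (Subgroup.mem_zpowers _)) _
  have hρ : b * c ∈ R := Subgroup.mem_zpowers _
  have hb_step : ∀ x, (x * b ∈ R ∨ x ∈ R) → (b * x * b ∈ R ∨ b * x ∈ R) := by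
    rintro x (h | h)
    · right
      have := hconj _ h
      rwa [mul_assoc, mul_assoc x, hbb, mul_one] at this
    · exact Or.inl (hconj _ h)
  have hc_step : ∀ x, (x * b ∈ R ∨ x ∈ R) → (c * x * b ∈ R ∨ c * x ∈ R) := by
    intro x h
    have e : c * x = b * (b * c * x) := by
      rw [← mul_assoc, ← mul_assoc, hbb, one_mul]
    rw [e]
    refine hb_step _ (h.imp (fun h ↦ ?_) fun h ↦ mul_mem hρ h)
    rw [mul_assoc]; exact mul_mem hρ h
  have hidx : R.relIndex P = 2 := by
    rw [Subgroup.relIndex_eq_two_iff_exists_notMem_and]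
    refine ⟨b, hbP, hbR, fun x hx ↦ ?_⟩
    induction hx using Subgroup.closure_induction_left with
    | one => exact Or.inr (one_mem _)
    | mul_left y hy x _ ih =>
      rcases hy with rfl | rfl
      · exact hb_step x ih
      · exact hc_step x ih
    | inv_mul_cancel y hy x _ ih =>
      rcases hy with rfl | rfl
      · rw [hbinv]; exact hb_step x ih
      · rw [hcinv]; exact hc_step x ih
  have := Subgroup.relIndex_mul_relIndex ⊥ R P bot_le hRP
  rw [Subgroup.relIndex_bot_left, Subgroup.relIndex_bot_left, hidx, hR, Nat.card_zpowers,
    hord] at this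
  rw [← this, mul_comm]

/-- Coset enumeration for `P = ⟨b, c⟩`. Here `σ i j` is the vertex to which `s i` carries vertex `j`,
the word `L j` carries vertex `0` to vertex `j`, and `τ i j` is the word in `b, c` by which
`s i * L j` and `L (σ i j)` differ. -/
lemma card_of_cosetTable {M : CoxeterMatrix (Fin 3)} {W : Type*} [Group W]
    (cs : CoxeterSystem M W) {q n : ℕ} (hord : orderOf (cs.simple 1 * cs.simple 2) = q)
    (σ : Fin 3 → Fin (n + 1) → Fin (n + 1))
    (hσ : M.IsLiftable (G := Function.End (Fin (n + 1))) σ)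
    (L : Fin (n + 1) → List (Fin 3)) (τ : Fin 3 → Fin (n + 1) → List (Fin 3))
    (h1 : σ 1 0 = 0) (h2 : σ 2 0 = 0) (hL0 : L 0 = [])
    (hL : ∀ j, (L j).foldr σ 0 = j) (hτ : ∀ i j, 0 ∉ τ i j)
    (hstep : ∀ i j, cs.simple i * cs.wordProd (L j) =
      cs.wordProd (L (σ i j)) * cs.wordProd (τ i j)) :
    Nat.card W = 2 * q * (n + 1) := by
  set P := Subgroup.closure {cs.simple 1, cs.simple 2} with hP
  have hcard := card_vertexStabilizer cs hord
  set f : W →* Function.End (Fin (n + 1)) := cs.lift ⟨σ, hσ⟩ with hf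
  have hfs : ∀ i, f (cs.simple i) = σ i := fun i ↦ cs.lift_apply_simple hσ i
  have hfw : ∀ l : List (Fin 3), f (cs.wordProd l) 0 = l.foldr σ 0 := by
    intro l
    induction l with
    | nil => rw [cs.wordProd_nil, map_one]; rfl
    | cons i l ih =>
      rw [cs.wordProd_cons, map_mul, hfs, List.foldr_cons, ← ih]
      rfl
  have hfL : ∀ j, f (cs.wordProd (L j)) 0 = j := fun j ↦ (hfw _).trans (hL j)
  have hfix : ∀ x ∈ P, f x 0 = 0 := by
    intro x hx
    have hgen : ∀ y ∈ ({cs.simple 1, cs.simple 2} : Set W), f y 0 = 0 := by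
      rintro y (rfl | rfl)
      · rw [hfs, h1]
      · rw [hfs, h2]
    have hgen' : ∀ y ∈ ({cs.simple 1, cs.simple 2} : Set W), y⁻¹ = y := by
      rintro y (rfl | rfl) <;> exact cs.inv_simple _
    have hmul : ∀ y z, f y 0 = 0 → f z 0 = 0 → f (y * z) 0 = 0 := by
      intro y z hy hz
      rw [map_mul]
      exact (congrArg (f y) hz).trans hy
    induction hx using Subgroup.closure_induction_left with
    | one => rw [map_one]; rfl
    | mul_left y hy z _ ih => exact hmul _ _ (hgen y hy) ih
    | inv_mul_cancel y hy z _ ih => exact hmul _ _ (by rw [hgen' y hy, hgen y hy]) ih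
  have hτP : ∀ i j, cs.wordProd (τ i j) ∈ P := by
    intro i j
    refine Subgroup.list_prod_mem _ fun x hx ↦ ?_
    obtain ⟨k, hk, rfl⟩ := List.mem_map.1 hx
    refine Subgroup.subset_closure ?_
    have hk0 : k ≠ 0 := fun h ↦ hτ i j (h ▸ hk)
    fin_cases k
    · exact absurd rfl hk0
    · exact Or.inl rfl
    · exact Or.inr rfl
  have hcover : ∀ w : W, ∃ j, ∃ x ∈ P, w = cs.wordProd (L j) * x := by
    intro w
    induction w using cs.simple_induction_left with
    | one => exact ⟨0, 1, one_mem _, by rw [hL0, cs.wordProd_nil, one_mul]⟩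
    | mul_simple_left w i ih =>
      obtain ⟨j, x, hx, rfl⟩ := ih
      exact ⟨σ i j, _, mul_mem (hτP i j) hx, by rw [← mul_assoc, hstep, mul_assoc]⟩
  have hbij : Function.Bijective (fun j ↦ (cs.wordProd (L j) : W ⧸ P)) := by
    constructor
    · intro i j hij
      have hmem := hfix _ (QuotientGroup.eq.1 hij)
      have h : (f (cs.wordProd (L i)) * f ((cs.wordProd (L i))⁻¹ * cs.wordProd (L j))) 0 =
          f (cs.wordProd (L i)) 0 := congrArg (f (cs.wordProd (L i))) hmem
      rwa [← map_mul, mul_inv_cancel_left, hfL, hfL, eq_comm] at h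
    · intro w
      obtain ⟨w, rfl⟩ := QuotientGroup.mk_surjective w
      obtain ⟨j, x, hx, rfl⟩ := hcover w
      exact ⟨j, (QuotientGroup.mk_mul_of_mem _ hx).symm⟩
  rw [← Subgroup.card_mul_index P, hcard, Subgroup.index,
    ← Nat.card_congr (Equiv.ofBijective _ hbij), Nat.card_fin]

/-- If the table `σ` of `card_of_cosetTable` satisfies the relations of `W`, the order of `bc` can be
read off from it. -/
lemma orderOf_of_liftable {M : CoxeterMatrix (Fin 3)} {W G : Type*} [Group W] [Monoid G]
    (cs : CoxeterSystem M W) {q : ℕ} (hq : 0 < q) (hM : M 1 2 = q)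
    (σ : Fin 3 → G) (hσ : M.IsLiftable σ) (hne : ∀ m < q, 0 < m → (σ 1 * σ 2) ^ m ≠ 1) :
    orderOf (cs.simple 1 * cs.simple 2) = q := by
  rw [orderOf_eq_iff hq]
  refine ⟨hM ▸ cs.simple_mul_simple_pow 1 2, fun m hm h0 h ↦ hne m hm h0 ?_⟩
  have := congrArg (cs.lift ⟨σ, hσ⟩) h
  simpa only [map_pow, map_mul, map_one, cs.lift_apply_simple hσ] using this

/-- The duality `[p,q] ≅ [q,p]`. -/
lemma card_group_comm (p q : ℕ) (hp : 2 ≤ p) (hq : 2 ≤ q) :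
    Nat.card (tilingCoxeterMatrix p q hp hq).Group =
      Nat.card (tilingCoxeterMatrix q p hq hp).Group := by
  have h : (tilingCoxeterMatrix p q hp hq).reindex Fin.revPerm =
      tilingCoxeterMatrix q p hq hp := by
    apply CoxeterMatrix.ext
    ext i j
    fin_cases i <;> fin_cases j <;> rfl
  rw [← h]
  exact (Nat.card_congr (CoxeterMatrix.reindexGroupEquiv _ _).toEquiv).symm

/-- A map to a monoid satisfies the relations of `[p,q]` as soon as it does so on one ordering of
each pair of generators and the images are involutions. -/
lemma isLiftable_tiling {p q : ℕ} {hp : 2 ≤ p} {hq : 2 ≤ q} {G : Type*} [Monoid G] (σ : Fin 3 → G)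
    (h : ∀ i, σ i * σ i = 1) (h01 : (σ 0 * σ 1) ^ p = 1) (h12 : (σ 1 * σ 2) ^ q = 1)
    (h02 : (σ 0 * σ 2) ^ 2 = 1) : (tilingCoxeterMatrix p q hp hq).IsLiftable σ := by
  -- `y x` is inverse to `x y` for involutions `x, y`
  have hswap : ∀ i j n, (σ i * σ j) ^ n = 1 → (σ j * σ i) ^ n = 1 := by
    intro i j n hn
    have hinv : (σ j * σ i) * (σ i * σ j) = 1 := by
      rw [mul_assoc, ← mul_assoc (σ i), h, one_mul, h]
    have hinv' : (σ i * σ j) * (σ j * σ i) = 1 := by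
      rw [mul_assoc, ← mul_assoc (σ j), h, one_mul, h]
    have hc : Commute (σ j * σ i) (σ i * σ j) := hinv.trans hinv'.symm
    have := hc.mul_pow n
    rwa [hinv, one_pow, hn, mul_one, eq_comm] at this
  intro i j
  fin_cases i <;> fin_cases j
  · exact (pow_one _).trans (h 0)
  · exact h01
  · exact h02
  · exact hswap _ _ _ h01
  · exact (pow_one _).trans (h 1)
  · exact h12
  · exact hswap _ _ _ h02
  · exact hswap _ _ _ h12
  · exact (pow_one _).trans (h 2)

/-- The action of the simple reflections of `[2,q]` on the two vertices of the hosohedron `{2,q}`,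
which are the cosets of `⟨b, c⟩`. -/
def hosohedronTable : Fin 3 → Fin 2 → Fin 2 := ![![1, 0], ![0, 1], ![0, 1]]

/-- The action of the simple reflections of `[3,3]` on the vertices of the tetrahedron. -/
def tetrahedronTable : Fin 3 → Fin 4 → Fin 4 := ![![1, 0, 2, 3], ![0, 2, 1, 3], ![0, 1, 3, 2]]

/-- The action of the simple reflections of `[3,4]` on the vertices of the octahedron. -/
def octahedronTable : Fin 3 → Fin 6 → Fin 6 :=
  ![![1, 0, 2, 3, 5, 4], ![0, 2, 1, 4, 3, 5], ![0, 1, 3, 2, 4, 5]]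

/-- The action of the simple reflections of `[3,5]` on the vertices of the icosahedron. -/
def icosahedronTable : Fin 3 → Fin 12 → Fin 12 :=
  ![![1, 0, 2, 3, 6, 7, 4, 5, 8, 9, 11, 10], ![0, 2, 1, 4, 3, 5, 6, 8, 7, 10, 9, 11],
    ![0, 1, 3, 2, 5, 4, 7, 6, 9, 8, 10, 11]]

lemma card_two (q : ℕ) (hq : 2 ≤ q) :
    Nat.card (tilingCoxeterMatrix 2 q le_rfl hq).Group = 2 * q * 2 := by
  set cs := (tilingCoxeterMatrix 2 q le_rfl hq).toCoxeterSystem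
  have hσ : (tilingCoxeterMatrix 2 q le_rfl hq).IsLiftable
      (G := Function.End (Fin 2)) hosohedronTable := by
    refine isLiftable_tiling (G := Function.End (Fin 2)) _ ?_ ?_ ?_ ?_
    · intro i; funext j; revert i j; decide
    · funext j; revert j; decide
    · have h1 : @Eq (Function.End (Fin 2)) (hosohedronTable 1) 1 := by
        funext j; revert j; decide
      have h2 : @Eq (Function.End (Fin 2)) (hosohedronTable 2) 1 := by
        funext j; revert j; decide
      rw [h1, h2, one_mul, one_pow]
    · funext j; revert j; decide
  have hδ : (tilingCoxeterMatrix 2 q le_rfl hq).IsLiftable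
      (![1, DihedralGroup.sr 0, DihedralGroup.sr 1] : Fin 3 → DihedralGroup q) := by
    refine isLiftable_tiling _ ?_ ?_ ?_ ?_
    · intro i; fin_cases i <;> simp
    · simp [sq]
    · simp
    · simp [sq]
  have hord : orderOf (cs.simple 1 * cs.simple 2) = q := by
    refine orderOf_of_liftable cs (by omega) rfl _ hδ fun m hm h0 h ↦ ?_
    have h' : (DihedralGroup.r 1 : DihedralGroup q) ^ m = 1 := by simpa using h
    have := Nat.le_of_dvd h0 (orderOf_dvd_of_pow_eq_one h')
    rw [DihedralGroup.orderOf_r_one] at this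
    omega
  have hcomm : ∀ i, (tilingCoxeterMatrix 2 q le_rfl hq) i 0 = 2 →
      cs.simple i * cs.simple 0 = cs.simple 0 * cs.simple i := by
    intro i hi
    have h := cs.simple_mul_simple_pow i 0
    rw [hi, sq] at h
    have := eq_inv_of_mul_eq_one_left h
    rwa [mul_inv_rev, cs.inv_simple, cs.inv_simple] at this
  refine card_of_cosetTable cs hord hosohedronTable hσ
    ![[], [0]] ![![[], []], ![[1], [1]], ![[2], [2]]]
    rfl rfl rfl (by decide) (by decide) ?_
  intro i j
  fin_cases i <;> fin_cases j <;>
    simp [hosohedronTable, CoxeterSystem.wordProd_cons, hcomm 1 rfl, hcomm 2 rfl]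

/-- The relations of `[3,q]` in the form used to rewrite words. -/
lemma relations_three (q : ℕ) (hq : 2 ≤ q)
    (cs : CoxeterSystem (tilingCoxeterMatrix 3 q (by norm_num) hq)
      (tilingCoxeterMatrix 3 q (by norm_num) hq).Group) :
    (∀ i, cs.simple i * cs.simple i = 1) ∧
    cs.simple 0 * cs.simple 1 * cs.simple 0 = cs.simple 1 * cs.simple 0 * cs.simple 1 ∧
    cs.simple 2 * cs.simple 0 = cs.simple 0 * cs.simple 2 ∧
    (cs.simple 1 * cs.simple 2) ^ q = 1 := by
  have hs := cs.simple_mul_simple_self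
  have h01 : (cs.simple 0 * cs.simple 1) ^ 3 = 1 := cs.simple_mul_simple_pow 0 1
  have h02 : (cs.simple 0 * cs.simple 2) ^ 2 = 1 := cs.simple_mul_simple_pow 0 2
  have h0 := hs 0
  have h1 := hs 1
  have h2 := hs 2
  refine ⟨hs, ?_, ?_, cs.simple_mul_simple_pow 1 2⟩
  · simp only [pow_succ, pow_zero, one_mul] at h01
    grind
  · simp only [sq] at h02
    grind

lemma card_three_three :
    Nat.card (tilingCoxeterMatrix 3 3 (by norm_num) (by norm_num)).Group = 2 * 3 * 4 := by
  set cs := (tilingCoxeterMatrix 3 3 (by norm_num) (by norm_num)).toCoxeterSystem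
  obtain ⟨hs, hab, hac, hbc⟩ := relations_three _ _ cs
  have hσ : (tilingCoxeterMatrix 3 3 (by norm_num) (by norm_num)).IsLiftable
      (G := Function.End (Fin 4)) tetrahedronTable := by
    refine isLiftable_tiling (G := Function.End (Fin 4)) _ (fun i ↦ ?_) ?_ ?_ ?_
    · funext j; revert i j; decide
    all_goals funext j; revert j; decide
  have hord : orderOf (cs.simple 1 * cs.simple 2) = 3 := by
    refine orderOf_of_liftable cs (by norm_num) rfl _ hσ fun m hm h0 h ↦ ?_
    have := congrFun h 1
    interval_cases m <;> revert this <;> decide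
  have ha := hs 0
  have hb := hs 1
  have hc := hs 2
  simp only [pow_succ, pow_zero, one_mul] at hbc
  refine card_of_cosetTable cs hord tetrahedronTable hσ
    ![[], [0], [1, 0], [2, 1, 0]]
    ![![[], [], [1], [1]], ![[1], [], [], [2]], ![[2], [2], [], []]]
    rfl rfl rfl (by decide) (by decide) ?_
  intro i j
  fin_cases i <;> fin_cases j <;>
    simp [tetrahedronTable, CoxeterSystem.wordProd_cons] <;> grind

lemma card_three_four :
    Nat.card (tilingCoxeterMatrix 3 4 (by norm_num) (by norm_num)).Group = 2 * 4 * 6 := by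
  set cs := (tilingCoxeterMatrix 3 4 (by norm_num) (by norm_num)).toCoxeterSystem
  obtain ⟨hs, hab, hac, hbc⟩ := relations_three _ _ cs
  have hσ : (tilingCoxeterMatrix 3 4 (by norm_num) (by norm_num)).IsLiftable
      (G := Function.End (Fin 6)) octahedronTable := by
    refine isLiftable_tiling (G := Function.End (Fin 6)) _ (fun i ↦ ?_) ?_ ?_ ?_
    · funext j; revert i j; decide
    all_goals funext j; revert j; decide
  have hord : orderOf (cs.simple 1 * cs.simple 2) = 4 := by
    refine orderOf_of_liftable cs (by norm_num) rfl _ hσ fun m hm h0 h ↦ ?_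
    have := congrFun h 1
    interval_cases m <;> revert this <;> decide
  have ha := hs 0
  have hb := hs 1
  have hc := hs 2
  simp only [pow_succ, pow_zero, one_mul] at hbc
  refine card_of_cosetTable cs hord octahedronTable hσ
    ![[], [0], [1, 0], [2, 1, 0], [1, 2, 1, 0], [0, 1, 2, 1, 0]]
    ![![[], [], [1], [1], [], []], ![[1], [], [], [], [], [1]], ![[2], [2], [], [], [2], [2]]]
    rfl rfl rfl (by decide) (by decide) ?_
  intro i j
  fin_cases i <;> fin_cases j <;>
    simp [octahedronTable, CoxeterSystem.wordProd_cons] <;> grind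

lemma card_three_five :
    Nat.card (tilingCoxeterMatrix 3 5 (by norm_num) (by norm_num)).Group = 2 * 5 * 12 := by
  set cs := (tilingCoxeterMatrix 3 5 (by norm_num) (by norm_num)).toCoxeterSystem
  obtain ⟨hs, hab, hac, hbc⟩ := relations_three _ _ cs
  have hσ : (tilingCoxeterMatrix 3 5 (by norm_num) (by norm_num)).IsLiftable
      (G := Function.End (Fin 12)) icosahedronTable := by
    refine isLiftable_tiling (G := Function.End (Fin 12)) _ (fun i ↦ ?_) ?_ ?_ ?_
    · funext j; revert i j; decide
    all_goals funext j; revert j; decide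
  have hord : orderOf (cs.simple 1 * cs.simple 2) = 5 := by
    refine orderOf_of_liftable cs (by norm_num) rfl _ hσ fun m hm h0 h ↦ ?_
    have := congrFun h 1
    interval_cases m <;> revert this <;> decide
  have ha := hs 0
  have hb := hs 1
  have hc := hs 2
  simp only [pow_succ, pow_zero, one_mul] at hbc
  refine card_of_cosetTable cs hord icosahedronTable hσ
    ![[], [0], [1, 0], [2, 1, 0], [1, 2, 1, 0], [2, 1, 2, 1, 0], [0, 1, 2, 1, 0],
      [2, 0, 1, 2, 1, 0], [1, 2, 0, 1, 2, 1, 0], [2, 1, 2, 0, 1, 2, 1, 0],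
      [1, 2, 1, 2, 0, 1, 2, 1, 0], [0, 1, 2, 1, 2, 0, 1, 2, 1, 0]]
    ![![[], [], [1], [1], [], [], [], [], [2], [2], [], []],
      ![[1], [], [], [], [], [2], [1], [], [], [], [], [2]],
      ![[2], [2], [], [], [], [], [], [], [], [], [1], [1]]]
    rfl rfl rfl (by decide) (by decide) ?_
  intro i j
  fin_cases i <;> fin_cases j <;>
    simp [icosahedronTable, CoxeterSystem.wordProd_cons] <;> grind

theorem coxeter_group_card_of_spherical
    (p q : ℕ) (hp : 2 ≤ p) (hq : 2 ≤ q)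
    (hr : ((p : ℤ) - 2) * ((q : ℤ) - 2) < 4) :
    Nat.card (tilingCoxeterMatrix p q hp hq).Group =
      8 * p * q / (4 - (p - 2) * (q - 2)) := by
  -- by duality it suffices to treat `p ≤ q`
  wlog hpq : p ≤ q generalizing p q
  · rw [card_group_comm, this q p hq hp (by linarith) (by omega), mul_right_comm 8 q p,
      mul_comm (q - 2)]
  obtain rfl | hp3 := hp.eq_or_lt
  · rw [card_two]
    simp only [Nat.sub_self, zero_mul, Nat.sub_zero]
    omega
  have hp3' : p = 3 := by
    by_contra hne
    have h4p : (4 : ℤ) ≤ p := by omega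
    have h4q : (4 : ℤ) ≤ q := by omega
    nlinarith
  subst hp3'
  have hq5 : q ≤ 5 := by push_cast at hr; omega
  interval_cases q
  · exact card_three_three
  · exact card_three_four
  · exact card_three_five
end

section
/- The Coxeter group associated to the 3×3 Coxeter matrix M(3,3) (with M₁₂ = 3, M₂₃ = 3, M₁₃ = 2, diagonal entries 1) is isomorphic to the symmetric group on 4 elements. -/
/-- The product `x * y * z` with `x ∈ {1, a}`, `y ∈ {1, b, ba}` and `z ∈ {1, c, cb, cba}`
selected by the three indices. -/
def normalForm {G : Type*} [Group G] (a b c : G) (p : Fin 2 × Fin 3 × Fin 4) : G :=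
  ![1, a] p.1 * ![1, b, b * a] p.2.1 * ![1, c, c * b, c * b * a] p.2.2

theorem map_normalForm {G H : Type*} [Group G] [Group H] (φ : G →* H) (a b c : G)
    (p : Fin 2 × Fin 3 × Fin 4) :
    φ (normalForm a b c p) = normalForm (φ a) (φ b) (φ c) p := by
  obtain ⟨i, j, k⟩ := p
  fin_cases i <;> fin_cases j <;> fin_cases k <;> simp [normalForm]

/-- In a group, an involutive pair whose product has order dividing 3 satisfies the braid
relation. -/
theorem braid_of_pow_three {G : Type*} [Group G] {a b : G} (ha : a * a = 1) (hb : b * b = 1)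
    (h : (a * b) ^ 3 = 1) : b * a * b = a * b * a := by
  have h' : (a * b * a) * (b * a * b) = 1 := by rw [← h]; simp only [pow_succ, pow_zero, one_mul, mul_assoc]
  have h'' : (a * b * a) * (a * b * a) = 1 := by
    calc (a * b * a) * (a * b * a) = a * (b * (a * a) * b) * a := by group
      _ = 1 := by simp [ha, hb]
  exact mul_left_cancel (h'.trans h''.symm)

section

variable {G : Type*} [Group G] {a b c : G}

/-- Right multiplication by `1`, `a` or `b` maps `{1, b, ba}` into `{1, a} * {1, b, ba}`, so
`{1, b, ba}` meets every right coset of `⟨a⟩` in `⟨a, b⟩`. -/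
theorem exists_middle_mul (ha : a * a = 1) (hb : b * b = 1) (hab : b * a * b = a * b * a)
    (j : Fin 3) (s : G) (hs : s = 1 ∨ s = a ∨ s = b) :
    ∃ t : G, (t = 1 ∨ t = a) ∧
      ∃ j' : Fin 3, ![1, b, b * a] j * s = t * ![1, b, b * a] j' := by
  rcases hs with rfl | rfl | rfl
  · exact ⟨1, .inl rfl, j, by simp⟩
  · fin_cases j
    · exact ⟨_, .inr rfl, 0, by simp⟩
    · exact ⟨1, .inl rfl, 2, by simp⟩
    · exact ⟨1, .inl rfl, 1, by simp [mul_assoc, ha]⟩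
  · fin_cases j
    · exact ⟨1, .inl rfl, 1, by simp⟩
    · exact ⟨1, .inl rfl, 0, by simp [hb]⟩
    · exact ⟨a, .inr rfl, 2, by simp [hab, mul_assoc]⟩

/-- Right multiplication by a generator maps `{1, c, cb, cba}` into `{1, a, b} * {1, c, cb, cba}`,
so `{1, c, cb, cba}` meets every right coset of `⟨a, b⟩` in `⟨a, b, c⟩`. -/
theorem exists_last_mul (ha : a * a = 1) (hb : b * b = 1) (hc : c * c = 1)
    (hab : b * a * b = a * b * a) (hbc : c * b * c = b * c * b) (hac : a * c = c * a)
    (k : Fin 4) (s : G) (hs : s = a ∨ s = b ∨ s = c) :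
    ∃ t : G, (t = 1 ∨ t = a ∨ t = b) ∧
      ∃ k' : Fin 4, ![1, c, c * b, c * b * a] k * s = t * ![1, c, c * b, c * b * a] k' := by
  rcases hs with rfl | rfl | rfl
  · fin_cases k
    · exact ⟨_, .inr (.inl rfl), 0, by simp⟩
    · exact ⟨_, .inr (.inl rfl), 1, by simp [hac]⟩
    · exact ⟨1, .inl rfl, 3, by simp⟩
    · exact ⟨1, .inl rfl, 2, by simp [mul_assoc, ha]⟩
  · fin_cases k
    · exact ⟨_, .inr (.inr rfl), 0, by simp⟩
    · exact ⟨1, .inl rfl, 2, by simp⟩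
    · exact ⟨1, .inl rfl, 1, by simp [mul_assoc, hb]⟩
    · refine ⟨a, .inr (.inl rfl), 3, ?_⟩
      change c * s * a * s = a * (c * s * a)
      calc c * s * a * s = c * (s * a * s) := by group
        _ = (c * a) * s * a := by rw [hab]; group
        _ = a * (c * s * a) := by rw [← hac]; group
  · fin_cases k
    · exact ⟨1, .inl rfl, 1, by simp⟩
    · exact ⟨1, .inl rfl, 0, by simp [hc]⟩
    · exact ⟨b, .inr (.inr rfl), 2, by simp [hbc, mul_assoc]⟩
    · refine ⟨b, .inr (.inr rfl), 3, ?_⟩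
      change s * b * a * s = b * (s * b * a)
      calc s * b * a * s = s * b * (a * s) := by group
        _ = (s * b * s) * a := by rw [hac]; group
        _ = b * (s * b * a) := by rw [hbc]; group

theorem exists_normalForm_mul (ha : a * a = 1) (hb : b * b = 1) (hc : c * c = 1)
    (hab : b * a * b = a * b * a) (hbc : c * b * c = b * c * b) (hac : a * c = c * a)
    (p : Fin 2 × Fin 3 × Fin 4) (s : G) (hs : s = a ∨ s = b ∨ s = c) :
    ∃ q, normalForm a b c p * s = normalForm a b c q := by
  obtain ⟨i, j, k⟩ := p
  obtain ⟨t, ht, k', hk⟩ := exists_last_mul ha hb hc hab hbc hac k s hs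
  obtain ⟨u, hu, j', hj⟩ := exists_middle_mul ha hb hab j t ht
  have hi : ∃ i' : Fin 2, ![1, a] i * u = ![1, a] i' := by
    rcases hu with rfl | rfl
    · exact ⟨i, by simp⟩
    · fin_cases i
      · exact ⟨1, by simp⟩
      · exact ⟨0, by simp [ha]⟩
  obtain ⟨i', hi⟩ := hi
  refine ⟨(i', j', k'), ?_⟩
  simp only [normalForm]
  rw [mul_assoc, hk, ← mul_assoc, mul_assoc (![1, a] i), hj, ← mul_assoc, hi]

end

theorem normalForm_swap_injective : Function.Injective
    (normalForm (Equiv.swap 0 1 : Equiv.Perm (Fin 4)) (Equiv.swap 1 2) (Equiv.swap 2 3)) := by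
  unfold Function.Injective
  decide +kernel

theorem coxeter_group_tetrahedron :
    Nonempty ((tilingCoxeterMatrix 3 3 (by norm_num) (by norm_num)).Group ≃*
      Equiv.Perm (Fin 4)) := by
  set M := tilingCoxeterMatrix 3 3 (by norm_num) (by norm_num)
  let cs := M.toCoxeterSystem
  let f : Fin 3 → Equiv.Perm (Fin 4) := ![Equiv.swap 0 1, Equiv.swap 1 2, Equiv.swap 2 3]
  have hf : M.IsLiftable f := by
    intro i j
    fin_cases i <;> fin_cases j <;> decide +kernel
  let φ : M.Group →* Equiv.Perm (Fin 4) := cs.lift ⟨f, hf⟩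
  have hφ (i : Fin 3) : φ (cs.simple i) = f i := cs.lift_apply_simple hf i
  let nf := normalForm (cs.simple 0) (cs.simple 1) (cs.simple 2)
  have hsq (i : Fin 3) : cs.simple i * cs.simple i = 1 := cs.simple_mul_simple_self i
  have hab := braid_of_pow_three (hsq 0) (hsq 1) (cs.simple_mul_simple_pow 0 1)
  have hbc := braid_of_pow_three (hsq 1) (hsq 2) (cs.simple_mul_simple_pow 1 2)
  have hac : cs.simple 0 * cs.simple 2 = cs.simple 2 * cs.simple 0 := by
    have h : (cs.simple 0 * cs.simple 2) ^ 2 = 1 := cs.simple_mul_simple_pow 0 2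
    rw [pow_two] at h
    simpa using eq_inv_of_mul_eq_one_left h
  have hnf : Function.Surjective nf := by
    intro w
    induction w using cs.simple_induction_right with
    | one => exact ⟨(0, 0, 0), by simp [nf, normalForm]⟩
    | mul_simple_right w i ih =>
      obtain ⟨p, rfl⟩ := ih
      obtain ⟨q, hq⟩ := exists_normalForm_mul (hsq 0) (hsq 1) (hsq 2) hab hbc hac p
        (cs.simple i) (by fin_cases i <;> simp)
      exact ⟨q, hq.symm⟩
  have hcomp : φ ∘ nf = normalForm (Equiv.swap 0 1) (Equiv.swap 1 2) (Equiv.swap 2 3) := by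
    funext p
    simp only [Function.comp_apply, nf, map_normalForm, hφ]
    rfl
  have hbij : Function.Bijective (φ ∘ nf) := by
    rw [hcomp, Fintype.bijective_iff_injective_and_card]
    exact ⟨normalForm_swap_injective, by simp [Fintype.card_perm, Nat.factorial]⟩
  have hφbij : Function.Bijective φ := by
    refine ⟨fun x y hxy => ?_, hbij.2.of_comp⟩
    obtain ⟨p, rfl⟩ := hnf x
    obtain ⟨q, rfl⟩ := hnf y
    exact congrArg nf (hbij.1 hxy)
  exact ⟨MulEquiv.ofBijective φ hφbij⟩
end

section
/- The Coxeter group associated to the 3×3 Coxeter matrix M(3,5) (with M₁₂ = 3, M₂₃ = 5, M₁₃ = 2, diagonal entries 1) is isomorphic to the direct product of the alternating group on 5 elements with a cyclic group of order 2. -/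
namespace Icosahedron

section UpperBound

variable {W : Type*} [Group W]

/-- The ten alternating words in `b` and `c` of length at most `5`. If `b` and `c` are involutions
with `(bc)⁵ = 1`, they exhaust the dihedral subgroup `⟨b, c⟩`. -/
def dihedralElts (b c : W) : List W :=
  [1, b, c, b * c, c * b, b * (c * b), c * (b * c), b * (c * (b * c)), c * (b * (c * b)),
    b * (c * (b * (c * b)))]

/-- Representatives of the left cosets of `⟨b, c⟩`, one for each vertex of the icosahedron: the
base vertex, its five neighbours, the five neighbours of the antipode, and the antipode. -/
def vertexReps (a b c : W) : List W :=
  [1,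
    a, b * a, c * (b * a), b * (c * (b * a)), c * (b * (c * (b * a))),
    a * (b * (c * (b * a))), c * (a * (b * (c * (b * a)))),
    b * (c * (a * (b * (c * (b * a))))), c * (b * (c * (a * (b * (c * (b * a)))))),
    b * (c * (b * (c * (a * (b * (c * (b * a))))))),
    a * (b * (c * (b * (c * (a * (b * (c * (b * a))))))))]

theorem mul_dihedralElts {b c : W} (hb : b * b = 1) (hc : c * c = 1)
    (hbc : b * (c * (b * (c * b))) = c * (b * (c * (b * c)))) :
    ∀ h ∈ dihedralElts b c, b * h ∈ dihedralElts b c ∧ c * h ∈ dihedralElts b c := by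
  have hb' (z : W) : b * (b * z) = z := by rw [← mul_assoc, hb, one_mul]
  have hc' (z : W) : c * (c * z) = z := by rw [← mul_assoc, hc, one_mul]
  have h1 : c * (b * (c * (b * (c * b)))) = b * (c * (b * c)) := by rw [hbc, hc']
  simp only [dihedralElts, List.forall_mem_cons, mul_one, hb, hc, hb', hc', h1, ← hbc]
  simp

/-- The action of the generators on the vertices of the icosahedron, lifted to words. -/
theorem mul_vertexReps {a b c : W} (ha : a * a = 1) (hb : b * b = 1) (hc : c * c = 1)
    (hab : a * (b * a) = b * (a * b)) (hac : a * c = c * a)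
    (hbc : b * (c * (b * (c * b))) = c * (b * (c * (b * c)))) :
    ∀ s ∈ [a, b, c], ∀ t ∈ vertexReps a b c,
      ∃ t' ∈ vertexReps a b c, ∃ k ∈ [1, b, c], s * t = t' * k := by
  have ha' (z : W) : a * (a * z) = z := by rw [← mul_assoc, ha, one_mul]
  have hb' (z : W) : b * (b * z) = z := by rw [← mul_assoc, hb, one_mul]
  have hc' (z : W) : c * (c * z) = z := by rw [← mul_assoc, hc, one_mul]
  have hab' (z : W) : a * (b * (a * z)) = b * (a * (b * z)) := by
    simpa only [mul_assoc] using congrArg (· * z) hab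
  have hac' (z : W) : a * (c * z) = c * (a * z) := by
    simpa only [mul_assoc] using congrArg (· * z) hac
  have hbc' (z : W) : b * (c * (b * (c * (b * z)))) = c * (b * (c * (b * (c * z)))) := by
    simpa only [mul_assoc] using congrArg (· * z) hbc
  have e2 : a * (c * (b * a)) = c * (b * (a * b)) := by rw [hac', hab]
  have e3 : b * (c * (b * (c * (b * a)))) = c * (b * (c * (b * (a * c)))) := by
    rw [hbc', hac]
  have e4 : a * (c * (b * (c * (b * a)))) = c * (a * (b * (c * (b * a)))) := hac' _
  -- `x` represents a neighbour of the antipode; with `x` kept opaque, only the following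
  -- equations about the far half of the icosahedron are needed.
  generalize hx : a * (b * (c * (b * a))) = x at e4
  have hax : a * x = b * (c * (b * a)) := by rw [← hx, ha']
  have hbx : b * x = x * b := by
    rw [← hx, ← hab', e2]
    simp only [mul_assoc]
  have hacx : a * (c * x) = c * (b * (c * (b * a))) := by rw [hac', hax]
  have habcx : a * (b * (c * x)) = b * (c * (x * c)) := by
    rw [← hx, ← hac', hab', e3, hac']
    simp only [mul_assoc]
  have hacbcx : a * (c * (b * (c * x))) = c * (b * (c * (x * c))) := by rw [hac', habcx]
  have hcx : c * (b * (c * (b * (c * x)))) = b * (c * (b * (c * (x * b)))) := by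
    rw [← hbc', hbx]
  have hcy : c * (a * (b * (c * (b * (c * x))))) = a * (b * (c * (b * (c * (x * b))))) := by
    rw [← hac', hcx]
  have hby : b * (a * (b * (c * (b * (c * x))))) = a * (b * (c * (b * (c * (x * c))))) := by
    rw [← hab', hac', habcx]
  -- An equation `s * t = t' * k` is recorded according to the value of `k`.
  have k1 {u t : W} (ht : t ∈ vertexReps a b c) (h : u = t) :
      ∃ t' ∈ vertexReps a b c, ∃ k ∈ [1, b, c], u = t' * k := ⟨t, ht, 1, by simp, by simpa⟩
  have kb {u t : W} (ht : t ∈ vertexReps a b c) (h : u = t * b) :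
      ∃ t' ∈ vertexReps a b c, ∃ k ∈ [1, b, c], u = t' * k := ⟨t, ht, b, by simp, h⟩
  have kc {u t : W} (ht : t ∈ vertexReps a b c) (h : u = t * c) :
      ∃ t' ∈ vertexReps a b c, ∃ k ∈ [1, b, c], u = t' * k := ⟨t, ht, c, by simp, h⟩
  simp only [vertexReps, hx] at k1 kb kc ⊢
  simp only [List.forall_mem_cons, List.not_mem_nil, false_imp_iff, implies_true, and_true]
  -- The rows list the images under `a`, `b`, `c` of the twelve vertices, in the order of
  -- `vertexReps`.
  refine ⟨⟨k1 (t := a) ?_ ?_, k1 (t := 1) ?_ ?_, kb (t := b * a) ?_ ?_,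
      kb (t := c * (b * a)) ?_ ?_, k1 (t := x) ?_ ?_, k1 (t := c * x) ?_ ?_,
      k1 (t := b * (c * (b * a))) ?_ ?_, k1 (t := c * (b * (c * (b * a)))) ?_ ?_,
      kc (t := b * (c * x)) ?_ ?_, kc (t := c * (b * (c * x))) ?_ ?_,
      k1 (t := a * (b * (c * (b * (c * x))))) ?_ ?_, k1 (t := b * (c * (b * (c * x)))) ?_ ?_⟩,
    ⟨kb (t := 1) ?_ ?_, k1 (t := b * a) ?_ ?_, k1 (t := a) ?_ ?_,
      k1 (t := b * (c * (b * a))) ?_ ?_, k1 (t := c * (b * a)) ?_ ?_,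
      kc (t := c * (b * (c * (b * a)))) ?_ ?_, kb (t := x) ?_ ?_, k1 (t := b * (c * x)) ?_ ?_,
      k1 (t := c * x) ?_ ?_, k1 (t := b * (c * (b * (c * x)))) ?_ ?_,
      k1 (t := c * (b * (c * x))) ?_ ?_, kc (t := a * (b * (c * (b * (c * x))))) ?_ ?_⟩,
    ⟨kc (t := 1) ?_ ?_, kc (t := a) ?_ ?_, k1 (t := c * (b * a)) ?_ ?_, k1 (t := b * a) ?_ ?_,
      k1 (t := c * (b * (c * (b * a)))) ?_ ?_, k1 (t := b * (c * (b * a))) ?_ ?_,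
      k1 (t := c * x) ?_ ?_, k1 (t := x) ?_ ?_, k1 (t := c * (b * (c * x))) ?_ ?_,
      k1 (t := b * (c * x)) ?_ ?_, kb (t := b * (c * (b * (c * x)))) ?_ ?_,
      kb (t := a * (b * (c * (b * (c * x))))) ?_ ?_⟩⟩ <;>
  first
  | rfl
  | (simp only [List.mem_cons, true_or, or_true])
  | (simp only [hx, mul_assoc, mul_one, one_mul, ha, ha', hb', hc', hab, hac, e2, e3, e4,
      hax, hbx, hacx, habcx, hacbcx, hcx, hcy, hby])

/-- A coset enumeration bound: if `T` and `H` contain `1`, each generator sends `T`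
into `T * {1, k₁, k₂}`, and `H` absorbs
`k₁` and `k₂`, then `T * H` is stable under the generators, hence is all of `W`. -/
theorem card_le_of_closed {M : CoxeterMatrix (Fin 3)} (cs : CoxeterSystem M W) (T H : List W)
    {k₁ k₂ : W} (hT1 : 1 ∈ T) (hH1 : 1 ∈ H) (hH : ∀ h ∈ H, k₁ * h ∈ H ∧ k₂ * h ∈ H)
    (hT : ∀ i, ∀ t ∈ T, ∃ t' ∈ T, ∃ k ∈ [1, k₁, k₂], cs.simple i * t = t' * k) :
    Finite W ∧ Nat.card W ≤ T.length * H.length := by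
  have key (w : W) : ∃ t ∈ T, ∃ h ∈ H, t * h = w := by
    induction w using cs.simple_induction_left with
    | one => exact ⟨1, hT1, 1, hH1, one_mul 1⟩
    | mul_simple_left w i ih =>
      obtain ⟨t, ht, h, hh, rfl⟩ := ih
      obtain ⟨t', ht', k, hk, e⟩ := hT i t ht
      refine ⟨t', ht', k * h, ?_, by rw [← mul_assoc, ← e, mul_assoc]⟩
      simp only [List.mem_cons, List.not_mem_nil, or_false] at hk
      rcases hk with rfl | rfl | rfl
      · rwa [one_mul]
      · exact (hH h hh).1
      · exact (hH h hh).2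
  have hsurj : Function.Surjective
      (fun p : Fin T.length × Fin H.length => T[p.1] * H[p.2]) := by
    intro w
    obtain ⟨t, ht, h, hh, rfl⟩ := key w
    obtain ⟨i, hi, rfl⟩ := List.getElem_of_mem ht
    obtain ⟨j, hj, rfl⟩ := List.getElem_of_mem hh
    exact ⟨(⟨i, hi⟩, ⟨j, hj⟩), rfl⟩
  exact ⟨Finite.of_surjective _ hsurj, by simpa using Nat.card_le_card_of_surjective _ hsurj⟩

end UpperBound

section LowerBound

open Equiv

/-- Three involutions of `A₅` satisfying the relations of `[3,5]`. -/
def invol : Fin 3 → alternatingGroup (Fin 5) :=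
  ![⟨swap 0 1 * swap 2 3, by rw [Perm.mem_alternatingGroup]; decide⟩,
    ⟨swap 0 1 * swap 2 4, by rw [Perm.mem_alternatingGroup]; decide⟩,
    ⟨swap 0 2 * swap 1 3, by rw [Perm.mem_alternatingGroup]; decide⟩]

/-- The images of the simple reflections: as reflections reverse orientation, their second
component is the nontrivial element. -/
def reflImage (i : Fin 3) : alternatingGroup (Fin 5) × Multiplicative (ZMod 2) :=
  (invol i, Multiplicative.ofAdd 1)

theorem isLiftable_reflImage :
    (tilingCoxeterMatrix 3 5 (by norm_num) (by norm_num)).IsLiftable reflImage := by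
  intro i j
  fin_cases i <;> fin_cases j <;> decide

theorem eq_top_of_invol_mem (K : Subgroup (alternatingGroup (Fin 5))) (hK : ∀ i, invol i ∈ K) :
    K = ⊤ := by
  have hcard : Nat.card (alternatingGroup (Fin 5)) = 60 := by
    rw [nat_card_alternatingGroup, Nat.card_fin]; rfl
  have hdvd {g : alternatingGroup (Fin 5)} {n : ℕ} [Fact n.Prime] (hg : g ∈ K) (h1 : g ^ n = 1)
      (h2 : g ≠ 1) : n ∣ Nat.card K := by
    rw [← orderOf_eq_prime h1 h2]
    exact K.orderOf_dvd_natCard hg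
  have : Fact (Nat.Prime 5) := ⟨by norm_num⟩
  have d2 : 2 ∣ Nat.card K := hdvd (hK 0) (by decide) (by decide)
  have d3 : 3 ∣ Nat.card K := hdvd (K.mul_mem (hK 0) (hK 1)) (by decide) (by decide)
  have d5 : 5 ∣ Nat.card K := hdvd (K.mul_mem (hK 1) (hK 2)) (by decide) (by decide)
  have d30 : 30 ∣ Nat.card K := by omega
  have hmul := K.card_mul_index
  rw [hcard] at hmul
  obtain ⟨m, hm⟩ := d30
  have hidx : K.index ∣ 2 := ⟨m, by rw [hm] at hmul; linarith⟩
  rcases (Nat.dvd_prime Nat.prime_two).1 hidx with h | h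
  · exact Subgroup.index_eq_one.1 h
  · have := Subgroup.normal_of_index_eq_two h
    have : IsSimpleGroup (alternatingGroup (Fin 5)) := alternatingGroup.isSimpleGroup (by simp)
    refine (Subgroup.Normal.eq_bot_or_eq_top (H := K) inferInstance).resolve_left ?_
    rintro rfl
    simp at hm
    omega

set_option maxRecDepth 4000 in
theorem eq_top_of_reflImage_mem (R : Subgroup (alternatingGroup (Fin 5) × Multiplicative (ZMod 2)))
    (hR : ∀ i, reflImage i ∈ R) : R = ⊤ := by
  have hmap : R.map (MonoidHom.fst _ _) = ⊤ :=
    eq_top_of_invol_mem _ fun i => ⟨reflImage i, hR i, rfl⟩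
  have hz : (1, Multiplicative.ofAdd 1) ∈ R := by
    have h := R.pow_mem (R.mul_mem (R.mul_mem (hR 0) (hR 1)) (hR 2)) 5
    have e : (reflImage 0 * reflImage 1 * reflImage 2) ^ 5 = (1, Multiplicative.ofAdd 1) := by decide
    rwa [e] at h
  rw [eq_top_iff]
  rintro ⟨g, z⟩ -
  obtain ⟨⟨g', y⟩, hy, rfl⟩ : g ∈ R.map (MonoidHom.fst _ _) := hmap ▸ Subgroup.mem_top g
  have hzy : z = y ∨ z = y * Multiplicative.ofAdd 1 := by
    clear hy
    revert z y
    decide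
  rcases hzy with rfl | rfl
  · exact hy
  · simpa using R.mul_mem hy hz

end LowerBound

end Icosahedron

open Icosahedron in
theorem coxeter_group_icosahedron :
    Nonempty ((tilingCoxeterMatrix 3 5 (by norm_num) (by norm_num)).Group ≃*
      alternatingGroup (Fin 5) × Multiplicative (ZMod 2)) := by
  set M := tilingCoxeterMatrix 3 5 (by norm_num) (by norm_num)
  let cs := M.toCoxeterSystem
  obtain ⟨a, ha⟩ : ∃ a, a = cs.simple 0 := ⟨_, rfl⟩
  obtain ⟨b, hb⟩ : ∃ b, b = cs.simple 1 := ⟨_, rfl⟩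
  obtain ⟨c, hc⟩ : ∃ c, c = cs.simple 2 := ⟨_, rfl⟩
  have haa : a * a = 1 := ha ▸ cs.simple_mul_simple_self 0
  have hbb : b * b = 1 := hb ▸ cs.simple_mul_simple_self 1
  have hcc : c * c = 1 := hc ▸ cs.simple_mul_simple_self 2
  have iha : a⁻¹ = a := inv_eq_of_mul_eq_one_left haa
  have ihb : b⁻¹ = b := inv_eq_of_mul_eq_one_left hbb
  have ihc : c⁻¹ = c := inv_eq_of_mul_eq_one_left hcc
  have rab : (a * b) ^ 3 = 1 := by rw [ha, hb]; exact cs.simple_mul_simple_pow 0 1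
  have rac : (a * c) ^ 2 = 1 := by rw [ha, hc]; exact cs.simple_mul_simple_pow 0 2
  have rbc : (b * c) ^ 5 = 1 := by rw [hb, hc]; exact cs.simple_mul_simple_pow 1 2
  have hab : a * (b * a) = b * (a * b) := by
    have h : (a * (b * a)) * (b * (a * b)) = 1 := by
      simpa only [pow_succ, pow_zero, one_mul, mul_assoc] using rab
    simpa only [mul_inv_rev, iha, ihb, mul_assoc] using eq_inv_of_mul_eq_one_left h
  have hac : a * c = c * a := by
    have h : (a * c) * (a * c) = 1 := by
      simpa only [pow_succ, pow_zero, one_mul, mul_assoc] using rac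
    simpa only [mul_inv_rev, iha, ihc] using eq_inv_of_mul_eq_one_left h
  have hbc : b * (c * (b * (c * b))) = c * (b * (c * (b * c))) := by
    have h : (b * (c * (b * (c * b)))) * (c * (b * (c * (b * c)))) = 1 := by
      simpa only [pow_succ, pow_zero, one_mul, mul_assoc] using rbc
    simpa only [mul_inv_rev, ihb, ihc, mul_assoc] using eq_inv_of_mul_eq_one_left h
  have hgen (i : Fin 3) : cs.simple i ∈ [a, b, c] := by
    rw [ha, hb, hc]
    fin_cases i <;> simp
  obtain ⟨hfin, hle⟩ := card_le_of_closed cs (vertexReps a b c) (dihedralElts b c)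
    (by simp [vertexReps]) (by simp [dihedralElts]) (mul_dihedralElts hbb hcc hbc)
    fun i => mul_vertexReps haa hbb hcc hab hac hbc _ (hgen i)
  let φ := cs.lift ⟨reflImage, isLiftable_reflImage⟩
  have hsurj : Function.Surjective φ := MonoidHom.range_eq_top.1 <|
    eq_top_of_reflImage_mem _ fun i => ⟨cs.simple i, cs.lift_apply_simple isLiftable_reflImage i⟩
  refine ⟨MulEquiv.ofBijective φ (hsurj.bijective_of_nat_card_le ?_)⟩
  refine hle.trans (le_of_eq ?_)
  rw [Nat.card_prod, nat_card_alternatingGroup]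
  simp [vertexReps, dihedralElts, Nat.factorial]
end
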